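/- arXiv:1405.3502 — 3 statements merged into one kernel-verified Lean document; each statement's English description precedes it below -/
import Mathlib

section
/- For every real a > 1 and every x with |x| < π/(2a), the integral h(x) = ∫₀^∞ exp(−y^a e^{iax}) dy converges absolutely, and the function h is differentiable on the open interval (−π/(2a), π/(2a)) with h′(x) = −i·h(x). -/
open MeasureTheory

noncomputable section

/-- The Jones function `g(x,y) = exp(−y^a e^{iax})`, where `y^a` is the real power. -/
def jonesG (a x y : ℝ) : ℂ :=
  Complex.exp (-(y ^ a : ℝ) * Complex.exp (Complex.I * a * x))

/-- The function `h(x) = ∫₀^∞ g(x,y) dy`. -/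
def jonesH (a x : ℝ) : ℂ :=
  ∫ y in Set.Ioi (0 : ℝ), jonesG a x y

/-! The integral `F z = ∫₀^∞ exp (z y ^ a) dy` is holomorphic on `Re z < 0`, and the substitution
`y ↦ r ^ (1 / a) * y` makes it homogeneous of degree `-1 / a` under positive real scaling. Euler's
identity for homogeneous functions then gives `z F' z = -F z / a`. Since `h x = F (-exp (i a x))`
and `z = -exp (i a x)` satisfies `z' = i a z`, the chain rule yields `h' = -i h`. -/

theorem hasFDerivAt_apply_self_of_rpow_homogeneous {E F : Type*}
    [NormedAddCommGroup E] [NormedSpace ℝ E] [NormedAddCommGroup F] [NormedSpace ℝ F]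
    {f : E → F} {f' : E →L[ℝ] F} {x : E} {k : ℝ} (hf : HasFDerivAt f f' x)
    (hom : ∀ᶠ r : ℝ in nhds 1, f (r • x) = r ^ k • f x) : f' x = k • f x := by
  have along_ray : HasDerivAt (fun r : ℝ => f (r • x)) (f' x) 1 := by
    have hray : HasDerivAt (fun r : ℝ => r • x) x 1 := by
      simpa using (hasDerivAt_id (1 : ℝ)).smul_const x
    exact HasFDerivAt.comp_hasDerivAt 1 (by simpa using hf) hray
  have power_law : HasDerivAt (fun r : ℝ => r ^ k • f x) (k • f x) 1 := by
    simpa using (Real.hasDerivAt_rpow_const (.inl one_ne_zero)).smul_const (f x)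
  exact (along_ray.congr_of_eventuallyEq (hom.mono fun _ h => h.symm)).unique power_law

/-- The integral `∫₀^∞ exp (z y ^ p) dy` as a function of the complex parameter `z`, encoded as the
complex moment-generating function of `y ↦ y ^ p` under Lebesgue measure on `(0, ∞)` so that
its holomorphy comes from the general theory; it converges for `p > 0` and `Re z < 0`. -/
def rpowMGF (p : ℝ) : ℂ → ℂ :=
  ProbabilityTheory.complexMGF (fun y : ℝ => y ^ p) (volume.restrict (Set.Ioi 0))

section rpowMGF

open ProbabilityTheory Set

variable {p : ℝ} {z : ℂ}

theorem Iio_subset_integrableExpSet_rpow (hp : 0 < p) :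
    Iio 0 ⊆ integrableExpSet (fun y : ℝ => y ^ p) (volume.restrict (Ioi 0)) := by
  intro t (ht : t < 0)
  simpa [integrableExpSet, IntegrableOn] using
    integrableOn_rpow_mul_exp_neg_mul_rpow (s := 0) (by norm_num) hp (neg_pos.mpr ht)

theorem re_mem_interior_integrableExpSet_rpow (hp : 0 < p) (hz : z.re < 0) :
    z.re ∈ interior (integrableExpSet (fun y : ℝ => y ^ p) (volume.restrict (Ioi 0))) :=
  interior_maximal (Iio_subset_integrableExpSet_rpow hp) isOpen_Iio hz

theorem integrableOn_cexp_mul_rpow (hp : 0 < p) (hz : z.re < 0) :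
    IntegrableOn (fun y : ℝ => Complex.exp (z * (y ^ p : ℝ))) (Ioi 0) :=
  integrable_cexp_mul_of_re_mem_interior_integrableExpSet
    (re_mem_interior_integrableExpSet_rpow hp hz)

theorem rpowMGF_real_smul (hp : p ≠ 0) {r : ℝ} (hr : 0 < r) (z : ℂ) :
    rpowMGF p (r • z) = r ^ (-p⁻¹) • rpowMGF p z := by
  calc rpowMGF p (r • z)
      = ∫ y in Ioi (0 : ℝ), Complex.exp (z * ((r ^ p⁻¹ * y) ^ p : ℝ)) := by
        refine setIntegral_congr_fun measurableSet_Ioi fun y (hy : 0 < y) => ?_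
        simp only [Real.mul_rpow (Real.rpow_nonneg hr.le _) hy.le, Real.rpow_inv_rpow hr.le hp,
          Complex.real_smul, Complex.ofReal_mul]
        ring_nf
    _ = r ^ (-p⁻¹) • rpowMGF p z := by
        rw [integral_comp_mul_left_Ioi (fun y : ℝ => Complex.exp (z * (y ^ p : ℝ))) 0
          (Real.rpow_pos_of_pos hr _), mul_zero, Real.rpow_neg hr.le]
        rfl

theorem hasDerivAt_rpowMGF (hp : 0 < p) (hz : z.re < 0) :
    HasDerivAt (rpowMGF p) (-rpowMGF p z / (p * z)) z := by
  have hz0 : z ≠ 0 := by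
    rintro rfl
    exact hz.false
  have hp0 : (p : ℂ) ≠ 0 := Complex.ofReal_ne_zero.mpr hp.ne'
  have holomorphic : AnalyticAt ℂ (rpowMGF p) z :=
    analyticAt_complexMGF (re_mem_interior_integrableExpSet_rpow hp hz)
  have hF := holomorphic.differentiableAt.hasDerivAt
  have euler : z * deriv (rpowMGF p) z = -(p : ℂ)⁻¹ * rpowMGF p z := by
    simpa using hasFDerivAt_apply_self_of_rpow_homogeneous (hF.hasFDerivAt.restrictScalars ℝ)
      ((eventually_gt_nhds one_pos).mono fun r hr => rpowMGF_real_smul hp.ne' hr z)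
  refine hF.congr_deriv ?_
  field_simp at euler ⊢
  linear_combination euler

end rpowMGF

theorem jonesG_eq_cexp_mul_rpow (a x y : ℝ) :
    jonesG a x y = Complex.exp (-Complex.exp (Complex.I * a * x) * (y ^ a : ℝ)) := by
  rw [jonesG]
  ring_nf

theorem jonesH_eq_rpowMGF (a x : ℝ) :
    jonesH a x = rpowMGF a (-Complex.exp (Complex.I * a * x)) := by
  simp only [jonesH, jonesG_eq_cexp_mul_rpow, rpowMGF, ProbabilityTheory.complexMGF]

theorem re_neg_cexp_I_mul (a x : ℝ) :
    (-Complex.exp (Complex.I * a * x)).re = -Real.cos (a * x) := by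
  simp [Complex.exp_re]

theorem hasDerivAt_neg_cexp_I_mul (a : ℂ) (x : ℝ) :
    HasDerivAt (fun t : ℝ => -Complex.exp (Complex.I * a * t))
      (Complex.I * a * -Complex.exp (Complex.I * a * x)) x := by
  have phase : HasDerivAt (fun t : ℝ => Complex.I * a * t) (Complex.I * a) x := by
    simpa using (hasDerivAt_id x).ofReal_comp.const_mul (Complex.I * a)
  exact phase.cexp.neg.congr_deriv (by ring)

theorem cos_mul_pos_of_abs_lt {a x : ℝ} (ha : 0 < a) (hx : |x| < Real.pi / (2 * a)) :
    0 < Real.cos (a * x) := by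
  refine Real.cos_pos_of_mem_Ioo (abs_lt.mp ?_)
  calc |a * x| = a * |x| := by rw [abs_mul, abs_of_pos ha]
    _ < a * (Real.pi / (2 * a)) := by gcongr
    _ = Real.pi / 2 := by field_simp

theorem jonesH_integrable_hasDerivAt_general {a x : ℝ} (ha : 0 < a) (hx : 0 < Real.cos (a * x)) :
    IntegrableOn (fun y => jonesG a x y) (Set.Ioi (0 : ℝ)) volume ∧
      HasDerivAt (fun t => jonesH a t) (-Complex.I * jonesH a x) x := by
  have hz : (-Complex.exp (Complex.I * a * x)).re < 0 := by
    rw [re_neg_cexp_I_mul]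
    exact neg_neg_of_pos hx
  constructor
  · simpa only [jonesG_eq_cexp_mul_rpow] using integrableOn_cexp_mul_rpow ha hz
  · simp only [jonesH_eq_rpowMGF]
    have ha0 : (a : ℂ) ≠ 0 := Complex.ofReal_ne_zero.mpr ha.ne'
    refine ((hasDerivAt_rpowMGF ha hz).comp x (hasDerivAt_neg_cexp_I_mul a x)).congr_deriv ?_
    field_simp

/-- For `a > 1` and `|x| < π/(2a)`, the integral `h(x) = ∫₀^∞ exp(−y^a e^{iax}) dy`
converges absolutely, and `h` is differentiable on `(−π/(2a), π/(2a))` with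
`h′(x) = −i·h(x)`. -/
theorem jonesH_integrable_hasDerivAt (a : ℝ) (ha : 1 < a) :
    (∀ x : ℝ, |x| < Real.pi / (2 * a) →
      IntegrableOn (fun y => jonesG a x y) (Set.Ioi (0 : ℝ)) volume) ∧
    ∀ x ∈ Set.Ioo (-(Real.pi / (2 * a))) (Real.pi / (2 * a)),
      HasDerivAt (fun t => jonesH a t) (-Complex.I * jonesH a x) x := by
  have ha0 : 0 < a := zero_lt_one.trans ha
  have general {x : ℝ} (hx : |x| < Real.pi / (2 * a)) :=
    jonesH_integrable_hasDerivAt_general ha0 (cos_mul_pos_of_abs_lt ha0 hx)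
  exact ⟨fun _ hx => (general hx).1, fun _ hx => (general (abs_lt.mpr hx)).2⟩

end
end

section
/- For every real a > 1 and every x with |x| < π/(2a), h(x) = Γ(1/a + 1)·e^{−ix}; in particular h is bounded on (−π/(2a), π/(2a)) and is Lebesgue integrable on that interval. -/
open MeasureTheory

noncomputable section

/-!
The Laplace transform `z ↦ ∫ exp (-z y ^ a) dy` is holomorphic on the right half-plane and equals
`Γ(1/a + 1) z ^ (-1/a)` for positive real `z`, hence for all `z` with positive real part by the
identity theorem. For `|x| < π / (2a)` the point `z = exp (i a x)` lies in this half-plane and the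
principal branch gives `z ^ (-1/a) = exp (-i x)`, a function of modulus one.
-/

open Complex Filter Topology ProbabilityTheory

theorem eqOn_re_pos_of_forall_ofReal {E : Type*} [NormedAddCommGroup E] [NormedSpace ℂ E]
    [CompleteSpace E] {f g : ℂ → E} (hf : DifferentiableOn ℂ f {z | 0 < z.re})
    (hg : DifferentiableOn ℂ g {z | 0 < z.re}) (hfg : ∀ t : ℝ, 0 < t → f t = g t) :
    Set.EqOn f g {z | 0 < z.re} := by
  have hopen : IsOpen {z : ℂ | 0 < z.re} := isOpen_lt continuous_const continuous_re
  have hofReal : Tendsto ((↑) : ℝ → ℂ) (𝓝[≠] 1) (𝓝[≠] 1) :=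
    continuous_ofReal.continuousWithinAt.tendsto_nhdsWithin fun t ht ↦ by simpa using ht
  have hfg_near : ∀ᶠ t : ℝ in 𝓝[≠] 1, f t = g t :=
    ((lt_mem_nhds one_pos).filter_mono nhdsWithin_le_nhds).mono hfg
  exact (hf.analyticOnNhd hopen).eqOn_of_preconnected_of_frequently_eq (hg.analyticOnNhd hopen)
    (convex_halfSpace_re_gt 0).isPreconnected (by simp : (0 : ℝ) < re 1)
    (hofReal.frequently hfg_near.frequently)

section LaplaceTransform

variable {Ω : Type*} {m : MeasurableSpace Ω} {μ : Measure Ω} {X : Ω → ℝ}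

theorem differentiableOn_integral_cexp_neg_mul
    (hX : ∀ b : ℝ, 0 < b → Integrable (fun ω ↦ Real.exp (-b * X ω)) μ) :
    DifferentiableOn ℂ (fun z : ℂ ↦ ∫ ω, cexp (-z * X ω) ∂μ) {z | 0 < z.re} := by
  have hsub : Set.Iio 0 ⊆ integrableExpSet X μ := fun t ht ↦ by
    simpa [integrableExpSet] using hX (-t) (neg_pos.2 ht)
  refine (differentiableOn_complexMGF (X := X) (μ := μ)).comp differentiableOn_id.neg fun z hz ↦ ?_
  exact interior_maximal hsub isOpen_Iio (neg_lt_zero.2 hz : -z.re < 0)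

theorem integral_cexp_neg_mul_eq_of_forall_ofReal {F : ℂ → ℂ}
    (hX : ∀ b : ℝ, 0 < b → Integrable (fun ω ↦ Real.exp (-b * X ω)) μ)
    (hF : DifferentiableOn ℂ F {z | 0 < z.re})
    (hreal : ∀ b : ℝ, 0 < b → ((∫ ω, Real.exp (-b * X ω) ∂μ : ℝ) : ℂ) = F b)
    {z : ℂ} (hz : 0 < z.re) :
    ∫ ω, cexp (-z * X ω) ∂μ = F z := by
  refine eqOn_re_pos_of_forall_ofReal (differentiableOn_integral_cexp_neg_mul hX) hF
    (fun b hb ↦ ?_) hz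
  rw [← hreal b hb, ← integral_complex_ofReal]
  push_cast
  rfl

end LaplaceTransform

theorem integral_cexp_neg_mul_rpow {p : ℝ} {z : ℂ} (hp : 0 < p) (hz : 0 < z.re) :
    ∫ y in Set.Ioi (0 : ℝ), cexp (-z * (y ^ p : ℝ)) =
      z ^ (-1 / p : ℂ) * Real.Gamma (1 / p + 1) := by
  refine integral_cexp_neg_mul_eq_of_forall_ofReal (F := fun z ↦ z ^ (-1 / p : ℂ) * _)
    (fun b hb ↦ ?_) (fun w hw ↦ ?_) (fun b hb ↦ ?_) hz
  · simpa [IntegrableOn] using integrableOn_rpow_mul_exp_neg_mul_rpow neg_one_lt_zero hp hb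
  · exact ((differentiableAt_id.cpow_const (.inl hw)).mul_const _).differentiableWithinAt
  · rw [integral_exp_neg_mul_rpow hp hb, ofReal_mul, ofReal_cpow hb.le]
    push_cast
    rfl

theorem cexp_cpow_of_im_mem_Ioc {w : ℂ} (hw : w.im ∈ Set.Ioc (-Real.pi) Real.pi) (c : ℂ) :
    cexp w ^ c = cexp (w * c) := by
  rw [cpow_def_of_ne_zero (exp_ne_zero w), log_exp hw.1 hw.2]

theorem jonesH_eq_of_abs_lt {a x : ℝ} (ha : 0 < a) (hx : |x| < Real.pi / (2 * a)) :
    jonesH a x = (Real.Gamma (1 / a + 1) : ℂ) * cexp (-I * x) := by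
  have hθ : |a * x| < Real.pi / 2 := by
    rw [abs_mul, abs_of_pos ha]
    calc a * |x| < a * (Real.pi / (2 * a)) := by gcongr
      _ = Real.pi / 2 := by field_simp
  obtain ⟨hθ_lower, hθ_upper⟩ := abs_lt.1 hθ
  have hre : 0 < (cexp ((a * x : ℝ) * I)).re := by
    rw [exp_ofReal_mul_I_re]
    exact Real.cos_pos_of_mem_Ioo ⟨hθ_lower, hθ_upper⟩
  have him : ((a * x : ℝ) * I).im ∈ Set.Ioc (-Real.pi) Real.pi := by
    rw [im_ofReal_mul, I_im, mul_one]
    constructor <;> linarith [Real.pi_pos]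
  have hroot : cexp ((a * x : ℝ) * I) ^ (-1 / a : ℂ) = cexp (-I * x) := by
    rw [cexp_cpow_of_im_mem_Ioc him]
    have : (a : ℂ) ≠ 0 := ofReal_ne_zero.2 ha.ne'
    congr 1
    push_cast
    field_simp
  calc jonesH a x = ∫ y in Set.Ioi (0 : ℝ), cexp (-cexp ((a * x : ℝ) * I) * (y ^ a : ℝ)) := by
        simp only [jonesH, jonesG]
        congr! 3 with y
        push_cast
        ring_nf
    _ = Real.Gamma (1 / a + 1) * cexp (-I * x) := by
        rw [integral_cexp_neg_mul_rpow ha hre, hroot, mul_comm]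

theorem jonesH_eq_Gamma_mul_exp_general (a : ℝ) (ha : 0 < a) :
    (∀ x : ℝ, |x| < Real.pi / (2 * a) →
      jonesH a x = (Real.Gamma (1 / a + 1) : ℂ) * Complex.exp (-Complex.I * x)) ∧
    (∃ C : ℝ, ∀ x ∈ Set.Ioo (-(Real.pi / (2 * a))) (Real.pi / (2 * a)), ‖jonesH a x‖ ≤ C) ∧
    IntegrableOn (fun x => jonesH a x)
      (Set.Ioo (-(Real.pi / (2 * a))) (Real.pi / (2 * a))) volume := by
  have hEq : Set.EqOn (jonesH a) (fun x ↦ Real.Gamma (1 / a + 1) * cexp (-I * x))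
      (Set.Ioo (-(Real.pi / (2 * a))) (Real.pi / (2 * a))) :=
    fun x hx ↦ jonesH_eq_of_abs_lt ha (abs_lt.2 hx)
  refine ⟨fun x ↦ jonesH_eq_of_abs_lt ha, ⟨‖(Real.Gamma (1 / a + 1) : ℂ)‖, fun x hx ↦ ?_⟩, ?_⟩
  · simp [hEq hx, norm_exp]
  · have hcont : Continuous fun x : ℝ ↦ (Real.Gamma (1 / a + 1) : ℂ) * cexp (-I * x) := by fun_prop
    exact (hcont.integrableOn_Icc.mono_set Set.Ioo_subset_Icc_self).congr_fun hEq.symm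
      measurableSet_Ioo

/-- For `a > 1` and `|x| < π/(2a)`, `h(x) = Γ(1/a + 1)·e^{−ix}`; in particular `h` is
bounded on `(−π/(2a), π/(2a))` and Lebesgue integrable on that interval. -/
theorem jonesH_eq_Gamma_mul_exp (a : ℝ) (ha : 1 < a) :
    (∀ x : ℝ, |x| < Real.pi / (2 * a) →
      jonesH a x = (Real.Gamma (1 / a + 1) : ℂ) * Complex.exp (-Complex.I * x)) ∧
    (∃ C : ℝ, ∀ x ∈ Set.Ioo (-(Real.pi / (2 * a))) (Real.pi / (2 * a)), ‖jonesH a x‖ ≤ C) ∧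
    IntegrableOn (fun x => jonesH a x)
      (Set.Ioo (-(Real.pi / (2 * a))) (Real.pi / (2 * a))) volume := by
  exact jonesH_eq_Gamma_mul_exp_general a (by linarith)

end
end

section
/- (Lemma 17, one-dimensional case: Henstock–Kurzweil integrable functions lie in SD².) Take n = 1 and let ξ_k = E_k : ℝ → ℝ be the k-th (scalar) generating function, which has bounded total variation V(ξ_k) with V := sup_k V(ξ_k) < ∞. If f : ℝ → ℝ is Henstock–Kurzweil integrable on every compact interval and has finite Alexiewicz norm ‖f‖_A = sup_{a ≤ b} |(HK)∫_a^b f(x) dx| < ∞, then for every k the Henstock–Kurzweil integral F_k(f) = (HK)∫ ξ_k(x) f(x) dx exists, and ‖f‖_{SD²} = (Σ_{k≥1} 2^(−k) |F_k(f)|²)^{1/2} ≤ V·‖f‖_A < ∞. -/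
open MeasureTheory Real Filter Topology ENNReal

noncomputable section

/-- The scalar generating function `ξ_{l,c}(t) = e^(t−c)·3^(−(π+|c|))` for
`|t−c| ≤ π/2^(l+1)`, and `0` otherwise (case `n = 1`). -/
def xi1 (l : ℕ) (c t : ℝ) : ℝ :=
  if |t - c| ≤ Real.pi / 2 ^ (l + 1) then Real.exp (t - c) * (3 : ℝ) ^ (-(Real.pi + |c|))
  else 0

/-- The `k`-th generating function `ξ_k`: for `k ↦ (l,i)` (here `l = (b k).1 + 1 ≥ 1`,
`i = (b k).2`), `ξ_k` is `ξ_{l,xⁱ}` restricted to the closed interval centered at `xⁱ` of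
length `π/a_l`, `a_l = 3·2^(l−1)` (and `0` outside). -/
def xiK (x : ℕ → ℝ) (b : ℕ ≃ ℕ × ℕ) (k : ℕ) (t : ℝ) : ℝ :=
  if |t - x (b k).2| ≤ Real.pi / (2 * (3 * 2 ^ (b k).1)) then
    xi1 ((b k).1 + 1) (x (b k).2) t
  else 0

/-- `x` is an enumeration of the rational numbers. -/
def IsRationalEnum1 (x : ℕ → ℝ) : Prop :=
  Function.Injective x ∧ Set.range x = {t : ℝ | ∃ q : ℚ, t = (q : ℝ)}

/-- `y` is the Henstock–Kurzweil integral of `f` over `[a,b]`. -/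
def HKHasIntegral (f : ℝ → ℝ) (a b : ℝ) (h : a < b) (y : ℝ) : Prop :=
  BoxIntegral.HasIntegral (ι := Fin 1) (E := ℝ) (F := ℝ)
    ⟨fun _ => a, fun _ => b, fun _ => h⟩
    BoxIntegral.IntegrationParams.Henstock (fun p => f (p 0))
    BoxIntegral.BoxAdditiveMap.volume y

/-! The indefinite Henstock–Kurzweil integral `F` of `f` is continuous, and the Saks–Henstock lemma
shows that for bounded `g` the integral `∫ g f` may be computed as the Stieltjes integral `∫ g dF`.
If `g` has bounded variation and compact support, integration by parts turns this into `-∫ F dg`.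
Normalising `F 0 = 0` gives `|F| ≤ ‖f‖_A`, hence `|∫ g f| ≤ V(g) ‖f‖_A`; since the weights `2⁻ᵏ`
sum to `1`, the `SD²` norm obeys the same bound. Each `ξ_k` is an increasing exponential of size at
most `e^π` cut off to an interval, so `V(ξ_k) ≤ 2 e^π` uniformly in `k`.
-/

open Set BoxIntegral

section SaksHenstock

variable {ι E : Type*} [Fintype ι] [NormedAddCommGroup E] [NormedSpace ℝ E] {I : Box ι}
  {l : IntegrationParams} {f : (ι → ℝ) → E}

theorem exists_forall_dist_integral_le {F : Type*} [NormedAddCommGroup F] [NormedSpace ℝ F]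
    [CompleteSpace F] {vol : ι →ᵇᵃ E →L[ℝ] F} (h : Integrable I IntegrationParams.Henstock f vol)
    {ε : ℝ} (hε : 0 < ε) (x : ι → ℝ) :
    ∃ r > 0, ∀ J ≤ I, x ∈ Box.Icc J → Box.Icc J ⊆ Metric.closedBall x r →
      dist (vol J (f x)) (integral J IntegrationParams.Henstock f vol) ≤ ε := by
  refine ⟨h.convergenceR ε 0 x, (h.convergenceR ε 0 x).2, fun J hJ hxJ hball => ?_⟩
  have hxI : x ∈ Box.Icc I := Box.Icc.monotone hJ hxJ
  have hbase : IntegrationParams.Henstock.MemBaseSet I 0 (h.convergenceR ε 0)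
      (TaggedPrepartition.single I J hJ x hxI) :=
    ⟨(TaggedPrepartition.isSubordinate_single hJ hxI).2 hball,
      fun _ => (TaggedPrepartition.isHenstock_single_iff hJ hxI).2 hxJ,
      fun hD => absurd hD (by decide), fun hD => absurd hD (by decide)⟩
  simpa [integralSum, TaggedPrepartition.single]
    using h.dist_integralSum_sum_integral_le_of_memBaseSet hε hbase

theorem sum_abs_sub_integral_le {vol : ι →ᵇᵃ E →L[ℝ] ℝ} (h : Integrable I l f vol)
    {ε : ℝ} (hε : 0 < ε) {c : NNReal} {T : TaggedPrepartition I}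
    (hT : l.MemBaseSet I c (h.convergenceR ε c) T) :
    ∑ J ∈ T.boxes, |vol J (f (T.tag J)) - integral J l f vol| ≤ 2 * ε := by
  set e : Box ι → ℝ := fun J => vol J (f (T.tag J)) - integral J l f vol
  have abs_sum_filter_le (p : Box ι → Prop) [DecidablePred p] :
      |∑ J ∈ T.boxes with p J, e J| ≤ ε := by
    have := h.dist_integralSum_sum_integral_le_of_memBaseSet hε (hT.filter p)
    rw [Real.dist_eq, integralSum, ← Finset.sum_sub_distrib] at this
    convert this using 3
    · ext J
      simp [TaggedPrepartition.mem_filter]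
    · rfl
  have hpos := abs_sum_filter_le fun J => 0 ≤ e J
  have hneg := abs_sum_filter_le fun J => ¬ 0 ≤ e J
  calc ∑ J ∈ T.boxes, |e J|
      = (∑ J ∈ T.boxes with 0 ≤ e J, |e J|) + ∑ J ∈ T.boxes with ¬ 0 ≤ e J, |e J| :=
        (Finset.sum_filter_add_sum_filter_not _ _ _).symm
    _ = (∑ J ∈ T.boxes with 0 ≤ e J, e J) + ∑ J ∈ T.boxes with ¬ 0 ≤ e J, -e J :=
        congrArg₂ _
          (Finset.sum_congr rfl fun J hJ => abs_of_nonneg (Finset.mem_filter.1 hJ).2)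
          (Finset.sum_congr rfl fun J hJ => abs_of_neg (not_le.1 (Finset.mem_filter.1 hJ).2))
    _ ≤ 2 * ε := by
        rw [Finset.sum_neg_distrib, two_mul]
        exact add_le_add ((le_abs_self _).trans hpos) ((neg_le_abs _).trans hneg)

theorem hasIntegral_smul_of_hasIntegral_toSMul {vol : ι →ᵇᵃ E →L[ℝ] ℝ} (h : Integrable I l f vol)
    {Φ : ι →ᵇᵃ ℝ} (hΦ : ∀ J ≤ I, Φ J = integral J l f vol) {z : (ι → ℝ) → ℝ} {M : ℝ}
    (hz : ∀ x, |z x| ≤ M) {y : ℝ} (hy : HasIntegral I l z Φ.toSMul y) :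
    HasIntegral I l (fun x => z x • f x) vol y := by
  have hM : 0 ≤ M := (abs_nonneg _).trans (hz 0)
  refine HasIntegral.of_mul (2 * M + 1) fun ε hε => ?_
  obtain ⟨r, hr, hyr⟩ := hasIntegral_iff.1 hy ε hε
  refine ⟨fun c x => min (h.convergenceR ε c x) (r c x),
    fun c => (h.convergenceR_cond ε c).min (hr c), fun c T hT hp => ?_⟩
  have hsum := sum_abs_sub_integral_le h hε (hT.mono I le_rfl le_rfl fun x _ => min_le_left _ _)
  have hclose := hyr c T (hT.mono I le_rfl le_rfl fun x _ => min_le_right _ _) hp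
  have hdiff : dist (integralSum (fun x => z x • f x) vol T) (integralSum z Φ.toSMul T)
      ≤ M * (2 * ε) :=
    calc dist (integralSum (fun x => z x • f x) vol T) (integralSum z Φ.toSMul T)
        = |∑ J ∈ T.boxes, z (T.tag J) * (vol J (f (T.tag J)) - integral J l f vol)| := by
          rw [Real.dist_eq, integralSum, integralSum, ← Finset.sum_sub_distrib]
          congr 1
          refine Finset.sum_congr rfl fun J hJ => ?_
          rw [map_smul, BoxAdditiveMap.toSMul_apply, hΦ J (T.le_of_mem hJ), smul_eq_mul,
            smul_eq_mul, mul_sub, mul_comm (integral J l f vol)]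
      _ ≤ ∑ J ∈ T.boxes, M * |vol J (f (T.tag J)) - integral J l f vol| :=
          (Finset.abs_sum_le_sum_abs _ _).trans <| Finset.sum_le_sum fun J _ => by
            rw [abs_mul]
            exact mul_le_mul_of_nonneg_right (hz _) (abs_nonneg _)
      _ ≤ M * (2 * ε) := by
          rw [← Finset.mul_sum]
          exact mul_le_mul_of_nonneg_left hsum hM
  calc dist (integralSum (fun x => z x • f x) vol T) y
      ≤ M * (2 * ε) + ε := (dist_triangle _ _ _).trans (add_le_add hdiff hclose)
    _ = (2 * M + 1) * ε := by ring

end SaksHenstock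

section Interval

/-- The one-dimensional box `(a, b]`, the carrier of `HKHasIntegral` over `[a, b]`. -/
def intervalBox (a b : ℝ) (h : a < b) : Box (Fin 1) := ⟨fun _ => a, fun _ => b, fun _ => h⟩

theorem intervalBox_lower_upper (J : Box (Fin 1)) :
    intervalBox (J.lower 0) (J.upper 0) (J.lower_lt_upper 0) = J := by
  obtain ⟨l, u, h⟩ := J
  simp only [intervalBox, Box.mk.injEq]
  exact ⟨funext fun i => congrArg l (Subsingleton.elim 0 i),
    funext fun i => congrArg u (Subsingleton.elim 0 i)⟩

theorem mem_Icc_fin_one {J : Box (Fin 1)} {p : Fin 1 → ℝ} :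
    p ∈ Box.Icc J ↔ p 0 ∈ Icc (J.lower 0) (J.upper 0) := by
  simp only [Box.Icc_def, mem_Icc, Pi.le_def, Fin.forall_fin_one]

theorem dist_fin_one (p q : Fin 1 → ℝ) : dist p q = |p 0 - q 0| := by
  rw [dist_pi_def, Finset.univ_unique, Finset.sup_singleton, coe_nndist, Real.dist_eq]
  rfl

theorem Icc_subset_closedBall_iff_fin_one {J : Box (Fin 1)} {p : Fin 1 → ℝ} {r : ℝ} :
    Box.Icc J ⊆ Metric.closedBall p r ↔
      Icc (J.lower 0) (J.upper 0) ⊆ Metric.closedBall (p 0) r := by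
  constructor
  · intro h t ht
    simpa [dist_fin_one, Real.dist_eq] using h (mem_Icc_fin_one.2 ht : (fun _ => t) ∈ _)
  · intro h q hq
    simpa [dist_fin_one, Real.dist_eq] using h (mem_Icc_fin_one.1 hq)

/-- The box-additive map `(a, b] ↦ F b - F a` whose integrals are Stieltjes integrals against
`dF`. -/
def increment (F : ℝ → ℝ) : Fin 1 →ᵇᵃ ℝ :=
  BoxAdditiveMap.ofMapSplitAdd (fun J => F (J.upper 0) - F (J.lower 0)) ⊤ fun J _ i t ht => by
    obtain rfl : i = 0 := Subsingleton.elim i 0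
    rw [Box.splitLower_def ht, Box.splitUpper_def ht]
    simp only [Option.elim', Function.update_self, sub_add_sub_cancel']

theorem increment_apply (F : ℝ → ℝ) (J : Box (Fin 1)) :
    increment F J = F (J.upper 0) - F (J.lower 0) := rfl

end Interval

section VectorMeasure

theorem measurableSpace_real_eq_generateFrom_Ioc :
    (inferInstance : MeasurableSpace ℝ) =
      MeasurableSpace.generateFrom {s | ∃ u v, u ≤ v ∧ s = Ioc u v} := by
  rw [BorelSpace.measurable_eq (α := ℝ)]
  convert borel_eq_generateFrom_Ioc_le ℝ using 2
  grind only

theorem norm_setIntegral_vectorMeasure_le {X E : Type*} [MeasurableSpace X]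
    [NormedAddCommGroup E] [NormedSpace ℝ E] {μ : VectorMeasure X E} [IsFiniteMeasure μ.variation]
    {φ : X → ℝ} {s : Set X} {C : ℝ} (hC : 0 ≤ C) (h : ∀ x ∈ s, |φ x| ≤ C) :
    ‖∫ᵛ x in s, φ x ∂•μ‖ ≤ C * μ.variation.real s := by
  refine (VectorMeasure.norm_setIntegral_le_of_norm_le_const (f := φ) h).trans ?_
  rw [mul_assoc]
  refine mul_le_mul_of_nonneg_left ?_ hC
  exact mul_le_of_le_one_left measureReal_nonneg ContinuousLinearMap.opNorm_lsmul_le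

variable {E : Type*} [NormedAddCommGroup E]

theorem vectorMeasure_ext_of_Ioc {μ ν : VectorMeasure ℝ E}
    (h : ∀ u v, u ≤ v → μ (Ioc u v) = ν (Ioc u v)) : μ = ν := by
  refine VectorMeasure.ext_of_generateFrom {s | ∃ u v, u ≤ v ∧ s = Ioc u v} ?_
    measurableSpace_real_eq_generateFrom_Ioc IsSetSemiring.Ioc.isPiSystem ?_
  · rintro s ⟨u, v, huv, rfl⟩
    exact h u v huv
  · have hmono : Monotone fun n : ℕ => Ioc (-n : ℝ) n := fun m n hmn =>
      have hmn : (m : ℝ) ≤ n := Nat.cast_le.2 hmn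
      Ioc_subset_Ioc (neg_le_neg hmn) hmn
    have hunion : ⋃ n : ℕ, Ioc (-n : ℝ) n = univ := by
      refine eq_univ_of_forall fun t => mem_iUnion.2 ?_
      obtain ⟨n, hn⟩ := exists_nat_gt |t|
      exact ⟨n, (abs_lt.1 hn).1, (abs_lt.1 hn).2.le⟩
    have hlim (κ : VectorMeasure ℝ E) :
        Tendsto (fun n : ℕ => κ (Ioc (-n : ℝ) n)) atTop (𝓝 (κ univ)) :=
      hunion ▸ κ.tendsto_vectorMeasure_iUnion_atTop_nat hmono fun _ => measurableSet_Ioc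
    refine tendsto_nhds_unique (hlim μ) ((hlim ν).congr fun n => (h _ _ ?_).symm)
    exact neg_le_self n.cast_nonneg

variable [CompleteSpace E]

theorem variation_le_of_forall_Ioc {μ : VectorMeasure ℝ E} {ν : Measure ℝ} [IsFiniteMeasure ν]
    (h : ∀ u v, u ≤ v → ‖μ (Ioc u v)‖ₑ ≤ ν (Ioc u v)) : μ.variation ≤ ν := by
  have hIoc (u v : ℝ) (huv : u ≤ v) :
      AddContent.onIoc (fun t => μ (Iic t)) (Ioc u v) = μ (Ioc u v) := by
    rw [AddContent.onIoc_apply huv, ← Iic_union_Ioc_eq_Iic huv,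
      VectorMeasure.of_union (Iic_disjoint_Ioc le_rfl) measurableSet_Iic measurableSet_Ioc,
      add_sub_cancel_left]
  obtain ⟨κ, hκ, hκν⟩ :=
    VectorMeasure.exists_extension_of_isSetSemiring_of_le_measure_of_generateFrom (μ := ν)
      (m := AddContent.onIoc fun t => μ (Iic t)) IsSetSemiring.Ioc
      (by rintro s ⟨u, v, huv, rfl⟩; exact hIoc u v huv ▸ h u v huv)
      measurableSpace_real_eq_generateFrom_Ioc
  have hκμ : κ = μ := vectorMeasure_ext_of_Ioc fun u v huv =>
    (hκ _ ⟨u, v, huv, rfl⟩).trans (hIoc u v huv)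
  exact hκμ ▸ VectorMeasure.variation_le_of_forall_enorm_le fun s _ => hκν s

end VectorMeasure

section Variation

variable {E : Type*} [NormedAddCommGroup E] [CompleteSpace E] {g : ℝ → E}

theorem measure_stieltjesFunctionRightLim_Ioc (hg : BoundedVariationOn g univ) (x₀ : ℝ)
    {u v : ℝ} (huv : u ≤ v) :
    (hg.stieltjesFunctionRightLim x₀).measure (Ioc u v) = eVariationOn g.rightLim (Icc u v) := by
  rw [StieltjesFunction.measure_Ioc, BoundedVariationOn.stieltjesFunctionRightLim_apply,
    BoundedVariationOn.stieltjesFunctionRightLim_apply,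
    ← variationOnFromTo.add hg.rightLim.locallyBoundedVariationOn
      (mem_univ x₀) (mem_univ u) (mem_univ v),
    add_sub_cancel_left, variationOnFromTo.eq_of_le _ _ huv, univ_inter,
    ENNReal.ofReal_toReal (hg.rightLim.mono (subset_univ _))]

theorem isFiniteMeasure_stieltjesFunctionRightLim (hg : BoundedVariationOn g univ) (x₀ : ℝ) :
    IsFiniteMeasure (hg.stieltjesFunctionRightLim x₀).measure :=
  StieltjesFunction.isFiniteMeasure_of_forall_abs_le _ fun _ =>
    variationOnFromTo.abs_le_eVariationOn hg.rightLim

theorem variation_vectorMeasure_le_stieltjes (hg : BoundedVariationOn g univ) (x₀ : ℝ) :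
    hg.vectorMeasure.variation ≤ (hg.stieltjesFunctionRightLim x₀).measure := by
  have := isFiniteMeasure_stieltjesFunctionRightLim hg x₀
  refine variation_le_of_forall_Ioc fun u v huv => ?_
  rw [hg.vectorMeasure_Ioc huv, measure_stieltjesFunctionRightLim_Ioc hg x₀ huv,
    ← edist_eq_enorm_sub]
  exact eVariationOn.edist_le _ (right_mem_Icc.2 huv) (left_mem_Icc.2 huv)

theorem variation_vectorMeasure_le (hg : BoundedVariationOn g univ) {s : Set ℝ}
    (hs : IsOpen s) [s.OrdConnected] : hg.vectorMeasure.variation s ≤ eVariationOn g s := by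
  refine (variation_vectorMeasure_le_stieltjes hg 0 s).trans ?_
  rw [hs.measure_eq_iSup_isCompact]
  refine iSup₂_le fun K hKs => iSup_le fun hK => ?_
  rcases K.eq_empty_or_nonempty with rfl | hne
  · simp only [measure_empty, zero_le]
  obtain ⟨u, huK, hu⟩ := hK.exists_isLeast hne
  obtain ⟨v, hvK, hv⟩ := hK.exists_isGreatest hne
  obtain ⟨w, hws, hwu⟩ : (s ∩ Iio u).Nonempty := Filter.nonempty_of_mem <|
    inter_mem (mem_nhdsWithin_of_mem_nhds (hs.mem_nhds (hKs huK))) self_mem_nhdsWithin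
  have hKw : K ⊆ Ioc w v := fun t ht => ⟨(mem_Iio.1 hwu).trans_le (hu ht), hv ht⟩
  calc (hg.stieltjesFunctionRightLim 0).measure K
      ≤ (hg.stieltjesFunctionRightLim 0).measure (Ioc w v) := measure_mono hKw
    _ = eVariationOn g.rightLim (Icc w v) :=
      measure_stieltjesFunctionRightLim_Ioc hg 0 ((mem_Iio.1 hwu).le.trans (hu hvK))
    _ ≤ eVariationOn g.rightLim s :=
      eVariationOn.mono _ (Set.Icc_subset s hws (hKs hvK))
    _ ≤ eVariationOn g s := eVariationOn.eVariationOn_rightLim_le hs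

theorem isFiniteMeasure_variation_vectorMeasure (hg : BoundedVariationOn g univ) :
    IsFiniteMeasure hg.vectorMeasure.variation :=
  ⟨(variation_vectorMeasure_le hg isOpen_univ).trans_lt hg.lt_top⟩

theorem norm_rightLim_sub_le (hg : BoundedVariationOn g univ) {u v : ℝ} (huv : u ≤ v) :
    ‖g.rightLim v - g.rightLim u‖ ≤ hg.vectorMeasure.variation.real (Ioc u v) := by
  have := isFiniteMeasure_variation_vectorMeasure hg
  exact hg.vectorMeasure_Ioc huv ▸ VectorMeasure.norm_measure_le_variation

theorem variation_vectorMeasure_compl_Icc (hg : BoundedVariationOn g univ) {a c : ℝ}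
    (hsupp : Function.support g ⊆ Icc a c) : hg.vectorMeasure.variation (Icc a c)ᶜ = 0 := by
  have hzero {s : Set ℝ} (hs : IsOpen s) (hord : s.OrdConnected) (hsub : s ⊆ (Icc a c)ᶜ) :
      hg.vectorMeasure.variation s = 0 := by
    refine le_antisymm ((variation_vectorMeasure_le hg hs).trans_eq ?_) zero_le
    refine eVariationOn.constant_on (subsingleton_of_subset_singleton (a := 0) ?_)
    rintro _ ⟨t, ht, rfl⟩
    exact Function.notMem_support.1 fun h => hsub ht (hsupp h)
  have hcompl : (Icc a c)ᶜ = Iio a ∪ Ioi c := by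
    rw [← Ici_inter_Iic, compl_inter, compl_Ici, compl_Iic]
  rw [hcompl, measure_union_null_iff]
  exact ⟨hzero isOpen_Iio ordConnected_Iio (hcompl ▸ subset_union_left),
    hzero isOpen_Ioi ordConnected_Ioi (hcompl ▸ subset_union_right)⟩

end Variation

section Stieltjes

variable {F g : ℝ → ℝ}

theorem countable_setOf_rightLim_ne (hg : LocallyBoundedVariationOn g univ) :
    {t | g.rightLim t ≠ g t}.Countable := by
  obtain ⟨p, q, hp, hq, rfl⟩ := hg.exists_monotoneOn_sub_monotoneOn
  refine ((monotoneOn_univ.1 hp).countable_not_continuousAt.union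
    (monotoneOn_univ.1 hq).countable_not_continuousAt).mono fun t ht => ?_
  by_contra! h
  simp only [mem_union, mem_ofPred_eq, not_or, not_not] at h
  exact ht (h.1.sub h.2).continuousWithinAt.rightLim_eq

/-- The Stieltjes primitive of `g dF` obtained by integration by parts,
`t ↦ g(t⁺) F(t) - ∫_(a, t] F dg`. -/
def stieltjesPrimitive (F : ℝ → ℝ) (hg : BoundedVariationOn g univ) (a t : ℝ) : ℝ :=
  g.rightLim t * F t - ∫ᵛ s in Ioc a t, F s ∂•hg.vectorMeasure

theorem integrableOn_vectorMeasure_of_subset_Icc (hF : Continuous F)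
    (hg : BoundedVariationOn g univ) {s : Set ℝ} {u v : ℝ} (hs : MeasurableSet s)
    (hsub : s ⊆ Icc u v) : hg.vectorMeasure.IntegrableOn F s := by
  have := isFiniteMeasure_variation_vectorMeasure hg
  rw [VectorMeasure.IntegrableOn, VectorMeasure.Integrable, VectorMeasure.variation_restrict hs]
  exact hF.integrableOn_Icc.mono_set hsub

theorem integrableOn_Ioc_vectorMeasure (hF : Continuous F) (hg : BoundedVariationOn g univ)
    (u v : ℝ) : hg.vectorMeasure.IntegrableOn F (Ioc u v) :=
  integrableOn_vectorMeasure_of_subset_Icc hF hg measurableSet_Ioc Ioc_subset_Icc_self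

theorem stieltjesPrimitive_sub (hF : Continuous F) (hg : BoundedVariationOn g univ) {a u v : ℝ}
    (hau : a ≤ u) (huv : u ≤ v) :
    stieltjesPrimitive F hg a v - stieltjesPrimitive F hg a u =
      g.rightLim v * F v - g.rightLim u * F u - ∫ᵛ s in Ioc u v, F s ∂•hg.vectorMeasure := by
  rw [stieltjesPrimitive, stieltjesPrimitive, ← Ioc_union_Ioc_eq_Ioc hau huv,
    VectorMeasure.setIntegral_union (Ioc_disjoint_Ioc_of_le le_rfl) measurableSet_Ioc
      measurableSet_Ioc (integrableOn_Ioc_vectorMeasure hF hg a u)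
      (integrableOn_Ioc_vectorMeasure hF hg u v)]
  ring

theorem stieltjes_error_eq (hF : Continuous F) (hg : BoundedVariationOn g univ) {a u x v : ℝ}
    (hau : a ≤ u) (huv : u ≤ v) :
    g x * (F v - F u) - (stieltjesPrimitive F hg a v - stieltjesPrimitive F hg a u) =
      (∫ᵛ s in Ioc u v, (F s - F x) ∂•hg.vectorMeasure)
        - (g.rightLim v - g x) * (F v - F x) - (g x - g.rightLim u) * (F u - F x) := by
  have := isFiniteMeasure_variation_vectorMeasure hg
  rw [stieltjesPrimitive_sub hF hg hau huv, VectorMeasure.integral_fun_sub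
    (integrableOn_Ioc_vectorMeasure hF hg u v)
    (integrableOn_Ioc_vectorMeasure continuous_const hg u v), VectorMeasure.setIntegral_const,
    hg.vectorMeasure_Ioc huv, ContinuousLinearMap.lsmul_apply, smul_eq_mul]
  ring

theorem abs_stieltjes_error_le (hF : Continuous F) (hg : BoundedVariationOn g univ)
    {a u x v η : ℝ} (hau : a ≤ u) (hx : x ∈ Icc u v) (hη : ∀ s ∈ Icc u v, |F s - F x| ≤ η) :
    |g x * (F v - F u) - (stieltjesPrimitive F hg a v - stieltjesPrimitive F hg a u)| ≤
      2 * η * (hg.vectorMeasure.variation.real (Ioc u v) + |g x - g.rightLim x|) := by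
  have := isFiniteMeasure_variation_vectorMeasure hg
  obtain ⟨hux, hxv⟩ := hx
  have huv := hux.trans hxv
  have hη0 : 0 ≤ η := (abs_nonneg _).trans (hη x ⟨hux, hxv⟩)
  set T := hg.vectorMeasure.variation.real (Ioc u v)
  set d := |g x - g.rightLim x|
  have hint : |∫ᵛ s in Ioc u v, (F s - F x) ∂•hg.vectorMeasure| ≤ η * T := by
    rw [← Real.norm_eq_abs]
    exact norm_setIntegral_vectorMeasure_le hη0 fun s hs => hη s (Ioc_subset_Icc_self hs)
  have hright : |g.rightLim v - g x| ≤ hg.vectorMeasure.variation.real (Ioc x v) + d :=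
    (abs_sub_le _ (g.rightLim x) _).trans <|
      add_le_add (norm_rightLim_sub_le hg hxv) (abs_sub_comm _ _).le
  have hleft : |g x - g.rightLim u| ≤ d + hg.vectorMeasure.variation.real (Ioc u x) :=
    (abs_sub_le _ (g.rightLim x) _).trans <| add_le_add le_rfl (norm_rightLim_sub_le hg hux)
  have hT : hg.vectorMeasure.variation.real (Ioc u x) + hg.vectorMeasure.variation.real (Ioc x v)
      = T := by
    rw [← measureReal_union (Ioc_disjoint_Ioc_of_le le_rfl) measurableSet_Ioc,
      Ioc_union_Ioc_eq_Ioc hux hxv]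
  rw [stieltjes_error_eq hF hg hau huv]
  calc |_ - (g.rightLim v - g x) * (F v - F x) - (g x - g.rightLim u) * (F u - F x)|
      ≤ η * T + |g.rightLim v - g x| * |F v - F x| + |g x - g.rightLim u| * |F u - F x| := by
        rw [← abs_mul, ← abs_mul]
        exact (abs_sub _ _).trans (add_le_add ((abs_sub _ _).trans (add_le_add hint le_rfl)) le_rfl)
    _ ≤ η * T + (hg.vectorMeasure.variation.real (Ioc x v) + d) * η
          + (d + hg.vectorMeasure.variation.real (Ioc u x)) * η := by
        gcongr
        exacts [hη v ⟨huv, le_rfl⟩, hη u ⟨le_rfl, huv⟩]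
    _ = 2 * η * (T + d) := by linear_combination η * hT

theorem abs_integral_vectorMeasure_le (hg : BoundedVariationOn g univ) {A : ℝ}
    (hF : ∀ t, |F t| ≤ A) :
    |∫ᵛ s, F s ∂•hg.vectorMeasure| ≤ (eVariationOn g univ).toReal * A := by
  have := isFiniteMeasure_variation_vectorMeasure hg
  have hA : 0 ≤ A := (abs_nonneg _).trans (hF 0)
  calc |∫ᵛ s, F s ∂•hg.vectorMeasure|
      = ‖∫ᵛ s in univ, F s ∂•hg.vectorMeasure‖ := by
        rw [VectorMeasure.setIntegral_univ, Real.norm_eq_abs]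
    _ ≤ A * hg.vectorMeasure.variation.real univ :=
        norm_setIntegral_vectorMeasure_le hA fun t _ => hF t
    _ ≤ A * (eVariationOn g univ).toReal :=
        mul_le_mul_of_nonneg_left
          (ENNReal.toReal_mono hg (variation_vectorMeasure_le hg isOpen_univ)) hA
    _ = (eVariationOn g univ).toReal * A := mul_comm _ _

end Stieltjes

section StieltjesBox

variable {F g : ℝ → ℝ}

theorem exists_forall_dist_increment_stieltjesPrimitive_le (hF : Continuous F)
    (hg : BoundedVariationOn g univ) {a c : ℝ} (h : a < c) (p : Fin 1 → ℝ) {η : ℝ} (hη : 0 < η) :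
    ∃ r > 0, ∀ J ≤ intervalBox a c h, Box.Icc J ⊆ Metric.closedBall p r → p ∈ Box.Icc J →
      dist ((increment F).toSMul J (g (p 0))) (increment (stieltjesPrimitive F hg a) J) ≤
        2 * η * (hg.vectorMeasure.variation.real (Ioc (J.lower 0) (J.upper 0)) +
          |g (p 0) - g.rightLim (p 0)|) := by
  obtain ⟨r, hr, hFr⟩ := (Metric.nhds_basis_closedBall.tendsto_iff
    Metric.nhds_basis_closedBall).1 (hF.tendsto (p 0)) η hη
  refine ⟨r, hr, fun J hJ hJr hpJ => ?_⟩
  rw [BoxAdditiveMap.toSMul_apply, smul_eq_mul, mul_comm, Real.dist_eq]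
  exact abs_stieltjes_error_le hF hg ((Box.le_iff_bounds.1 hJ).1 0) (mem_Icc_fin_one.1 hpJ)
    fun s hs => hFr s (Icc_subset_closedBall_iff_fin_one.1 hJr hs)

theorem measureReal_Ioc_eq_increment (ν : Measure ℝ) [IsFiniteMeasure ν] (J : Box (Fin 1)) :
    ν.real (Ioc (J.lower 0) (J.upper 0)) = increment (fun t => ν.real (Iic t)) J := by
  have hJ := (J.lower_lt_upper 0).le
  rw [increment_apply, ← Iic_sdiff_Iic, measureReal_sdiff (Iic_subset_Iic.2 hJ) measurableSet_Iic]

theorem hasIntegral_toSMul_increment (hF : Continuous F) (hg : BoundedVariationOn g univ)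
    {a c : ℝ} (h : a < c) :
    HasIntegral (intervalBox a c h) IntegrationParams.Henstock (fun p => g (p 0))
      (increment F).toSMul
      (g.rightLim c * F c - g.rightLim a * F a - ∫ᵛ s in Ioc a c, F s ∂•hg.vectorMeasure) := by
  have := isFiniteMeasure_variation_vectorMeasure hg
  set ν := hg.vectorMeasure.variation
  have hB (J : Box (Fin 1)) : 0 ≤ increment (fun t => ν.real (Iic t)) J :=
    measureReal_Ioc_eq_increment ν J ▸ measureReal_nonneg
  have hcount : {p : Fin 1 → ℝ | g.rightLim (p 0) ≠ g (p 0)}.Countable :=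
    (countable_setOf_rightLim_ne hg.locallyBoundedVariationOn).preimage
      (Equiv.funUnique (Fin 1) ℝ).injective
  rw [← stieltjesPrimitive_sub hF hg le_rfl h.le]
  -- The error on `J` is `o(|dg|(J))` where `g` is right-continuous; at the countably many other
  -- points it only has to tend to zero, which continuity of `F` ensures.
  refine HasIntegral.of_le_Henstock_of_forall_isLittleO le_rfl
    ((increment fun t => ν.real (Iic t)).restrict _ le_top) hB
    ((increment (stieltjesPrimitive F hg a)).restrict _ le_top) _ hcount ?_ ?_
  · rintro _ p - ε hε
    set K := ν.real univ + |g (p 0) - g.rightLim (p 0)| + 1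
    have hK : 0 < K := by positivity
    obtain ⟨r, hr, hclose⟩ := exists_forall_dist_increment_stieltjesPrimitive_le hF hg h p
      (η := ε / (2 * K)) (by positivity)
    refine ⟨r, hr, fun J hJ hJr hpJ _ => (hclose J hJ hJr hpJ).trans ?_⟩
    calc 2 * (ε / (2 * K)) * (ν.real (Ioc (J.lower 0) (J.upper 0)) + |g (p 0) - g.rightLim (p 0)|)
        ≤ 2 * (ε / (2 * K)) * K := by
          gcongr
          exact (add_le_add (measureReal_mono (subset_univ _)) le_rfl).trans
            (le_add_of_nonneg_right zero_le_one)
      _ = ε := by field_simp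
  · rintro _ p ⟨-, hp⟩ ε hε
    obtain ⟨r, hr, hclose⟩ := exists_forall_dist_increment_stieltjesPrimitive_le hF hg h p
      (η := ε / 2) (by positivity)
    refine ⟨r, hr, fun J hJ hJr hpJ _ => (hclose J hJ hJr hpJ).trans_eq ?_⟩
    rw [not_not.1 hp, sub_self, abs_zero, add_zero, mul_div_cancel₀ _ two_ne_zero,
      measureReal_Ioc_eq_increment]
    rfl

theorem rightLim_eq_zero_of_support_subset {a c t : ℝ} (hsupp : Function.support g ⊆ Icc a c)
    (ht : c ≤ t) : g.rightLim t = 0 :=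
  rightLim_eq_of_tendsto <| tendsto_const_nhds.congr' <| by
    filter_upwards [self_mem_nhdsWithin] with s hs
    exact (Function.notMem_support.1 fun h => (hsupp h).2.not_gt (ht.trans_lt hs)).symm

theorem leftLim_eq_zero_of_support_subset {a c t : ℝ} (hsupp : Function.support g ⊆ Icc a c)
    (ht : t ≤ a) : g.leftLim t = 0 :=
  leftLim_eq_of_tendsto <| tendsto_const_nhds.congr' <| by
    filter_upwards [self_mem_nhdsWithin] with s hs
    exact (Function.notMem_support.1 fun h => (hsupp h).1.not_gt (lt_of_lt_of_le hs ht)).symm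

theorem integral_vectorMeasure_eq_of_support_subset (hF : Continuous F)
    (hg : BoundedVariationOn g univ) {a c : ℝ} (h : a ≤ c)
    (hsupp : Function.support g ⊆ Icc a c) :
    ∫ᵛ s, F s ∂•hg.vectorMeasure =
      g.rightLim a * F a + ∫ᵛ s in Ioc a c, F s ∂•hg.vectorMeasure := by
  have hsing : hg.vectorMeasure {a} = g.rightLim a := by
    rw [hg.vectorMeasure_singleton, leftLim_eq_zero_of_support_subset hsupp le_rfl, sub_zero]
  have hIcc : ∫ᵛ s in Icc a c, F s ∂•hg.vectorMeasure = ∫ᵛ s, F s ∂•hg.vectorMeasure := by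
    refine VectorMeasure.setIntegral_eq_integral_of_ae_compl_eq_zero measurableSet_Icc ?_
    filter_upwards [measure_eq_zero_iff_ae_notMem.1 (variation_vectorMeasure_compl_Icc hg hsupp)]
      with s hs hs'
    exact absurd hs' hs
  rw [← hIcc, ← Icc_union_Ioc_eq_Icc le_rfl h, Icc_self,
    VectorMeasure.setIntegral_union (by simp) (measurableSet_singleton a) measurableSet_Ioc
      (integrableOn_vectorMeasure_of_subset_Icc hF hg (measurableSet_singleton a)
        (Icc_self a).ge) (integrableOn_Ioc_vectorMeasure hF hg a c),
    VectorMeasure.integral_singleton, hsing, ContinuousLinearMap.lsmul_apply, smul_eq_mul,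
    mul_comm]

end StieltjesBox

section Primitive

variable {f F g : ℝ → ℝ}

/-- `F` is an indefinite Henstock–Kurzweil integral of `f` on the whole line. -/
def IsHKPrimitive (f F : ℝ → ℝ) : Prop :=
  ∀ a c (h : a < c), HKHasIntegral f a c h (F c - F a)

theorem HKHasIntegral.unique {a c y z : ℝ} {h : a < c} (hy : HKHasIntegral f a c h y)
    (hz : HKHasIntegral f a c h z) : y = z :=
  HasIntegral.unique hy hz

theorem HKHasIntegral.integral_eq {J : Box (Fin 1)} {y : ℝ}
    (h : HKHasIntegral f (J.lower 0) (J.upper 0) (J.lower_lt_upper 0) y) :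
    integral J IntegrationParams.Henstock (fun p => f (p 0)) BoxAdditiveMap.volume = y := by
  have := HasIntegral.integral_eq h
  rwa [← intervalBox, intervalBox_lower_upper] at this

theorem HKHasIntegral.add_eq {u t v p q y : ℝ} {hut : u < t} {htv : t < v}
    (hp : HKHasIntegral f u t hut p) (hq : HKHasIntegral f t v htv q)
    (hy : HKHasIntegral f u v (hut.trans htv) y) : p + q = y := by
  set I := intervalBox u v (hut.trans htv)
  have hI : Integrable I IntegrationParams.Henstock (fun p => f (p 0)) BoxAdditiveMap.volume :=
    HasIntegral.integrable hy
  have ht : t ∈ Ioo (I.lower 0) (I.upper 0) := ⟨hut, htv⟩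
  have hsplit := hI.toBoxAdditive.map_split_add le_rfl 0 t
  rw [Box.splitLower_def ht, Box.splitUpper_def ht] at hsplit
  exact (congrArg₂ (· + ·) (HKHasIntegral.integral_eq hp) (HKHasIntegral.integral_eq hq)).symm.trans
    (hsplit.trans (HasIntegral.integral_eq hy))

theorem exists_isHKPrimitive {Ival : ℝ → ℝ → ℝ}
    (hInt : ∀ a c : ℝ, ∀ h : a < c, HKHasIntegral f a c h (Ival a c)) (p : ℝ) :
    ∃ F : ℝ → ℝ, F p = 0 ∧ IsHKPrimitive f F := by
  have hadd {u t v : ℝ} (hut : u < t) (htv : t < v) : Ival u t + Ival t v = Ival u v :=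
    (hInt u t hut).add_eq (hInt t v htv) (hInt u v (hut.trans htv))
  let F : ℝ → ℝ := fun t => if p < t then Ival p t else if t < p then -Ival t p else 0
  refine ⟨F, by simp [F], fun u v huv => ?_⟩
  suffices F v - F u = Ival u v from this ▸ hInt u v huv
  grind

theorem IsHKPrimitive.integral_eq (hF : IsHKPrimitive f F) (J : Box (Fin 1)) :
    integral J IntegrationParams.Henstock (fun p => f (p 0)) BoxAdditiveMap.volume =
      increment F J :=
  (hF _ _ (J.lower_lt_upper 0)).integral_eq

theorem IsHKPrimitive.exists_forall_abs_sub_le (hF : IsHKPrimitive f F) (t : ℝ) {ε : ℝ}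
    (hε : 0 < ε) : ∃ r > 0, ∀ u v, u < v → t ∈ Icc u v → Icc u v ⊆ Metric.closedBall t r →
      |(v - u) * f t - (F v - F u)| ≤ ε := by
  set I := intervalBox (t - 1) (t + 1) (by linarith)
  obtain ⟨r, hr, hclose⟩ :=
    exists_forall_dist_integral_le (HasIntegral.integrable (hF (t - 1) (t + 1) _)) hε fun _ => t
  refine ⟨min r 1, by positivity, fun u v huv ht hball => ?_⟩
  have hsub := hball.trans (Metric.closedBall_subset_closedBall (min_le_right r 1))
  rw [Real.closedBall_eq_Icc, Icc_subset_Icc_iff huv.le] at hsub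
  have hle : intervalBox u v huv ≤ I := Box.le_iff_bounds.2 ⟨fun _ => hsub.1, fun _ => hsub.2⟩
  have hdist := hclose _ hle (mem_Icc_fin_one.2 ht) <| Icc_subset_closedBall_iff_fin_one.2 <|
    hball.trans (Metric.closedBall_subset_closedBall (min_le_left r 1))
  rw [hF.integral_eq, Real.dist_eq] at hdist
  simpa [intervalBox, increment_apply, BoxAdditiveMap.volume_apply] using hdist

theorem IsHKPrimitive.continuous (hF : IsHKPrimitive f F) : Continuous F := by
  refine continuous_iff_continuousAt.2 fun t => ?_
  have herr : Tendsto (fun s => (s - t) * f t - (F s - F t)) (𝓝 t) (𝓝 0) := by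
    refine (Metric.nhds_basis_closedBall.tendsto_iff Metric.nhds_basis_closedBall).2 fun ε hε => ?_
    obtain ⟨r, hr, hclose⟩ := hF.exists_forall_abs_sub_le t hε
    refine ⟨r, hr, fun s hs => mem_closedBall_zero_iff.2 ?_⟩
    have ht : t ∈ Metric.closedBall t r := Metric.mem_closedBall_self hr.le
    rw [Real.closedBall_eq_Icc] at hs ht hclose
    rcases lt_trichotomy s t with hst | rfl | hst
    · convert hclose s t hst (right_mem_Icc.2 hst.le) (Icc_subset_Icc hs.1 ht.2) using 1
      rw [Real.norm_eq_abs, ← abs_neg]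
      ring_nf
    · simpa only [sub_self, zero_mul, norm_zero] using hε.le
    · exact hclose t s hst (left_mem_Icc.2 hst.le) (Icc_subset_Icc ht.1 hs.2)
  have hlin : Tendsto (fun s => F t + (s - t) * f t) (𝓝 t) (𝓝 (F t + (t - t) * f t)) :=
    Continuous.tendsto (by fun_prop) t
  have hFs : ∀ s, F t + (s - t) * f t - ((s - t) * f t - (F s - F t)) = F s := fun s => by ring
  simpa only [ContinuousAt, hFs, sub_self, zero_mul, add_zero, sub_zero] using hlin.sub herr

theorem IsHKPrimitive.hasIntegral_mul (hF : IsHKPrimitive f F) (hg : BoundedVariationOn g univ)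
    {a c : ℝ} (h : a < c) :
    HKHasIntegral (fun t => g t * f t) a c h
      (g.rightLim c * F c - g.rightLim a * F a - ∫ᵛ s in Ioc a c, F s ∂•hg.vectorMeasure) := by
  have hbound (t : ℝ) : |g t| ≤ (eVariationOn g univ).toReal + |g 0| := by
    have := hg.dist_le (mem_univ t) (mem_univ 0)
    rw [Real.dist_eq] at this
    linarith [abs_sub_abs_le_abs_sub (g t) (g 0)]
  exact hasIntegral_smul_of_hasIntegral_toSMul (HasIntegral.integrable (hF a c h))
    (fun J _ => (hF.integral_eq J).symm) (fun p => hbound (p 0))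
    (hasIntegral_toSMul_increment hF.continuous hg h)

theorem IsHKPrimitive.hasIntegral_mul_of_support_subset (hF : IsHKPrimitive f F)
    (hg : BoundedVariationOn g univ) {a c : ℝ} (h : a < c)
    (hsupp : Function.support g ⊆ Icc a c) :
    HKHasIntegral (fun t => g t * f t) a c h (-∫ᵛ s, F s ∂•hg.vectorMeasure) := by
  convert hF.hasIntegral_mul hg h using 1
  rw [integral_vectorMeasure_eq_of_support_subset hF.continuous hg h.le hsupp,
    rightLim_eq_zero_of_support_subset hsupp le_rfl]
  ring

end Primitive

section WeightedSum

theorem summable_geometric_two_mul_sq_and_sqrt_tsum_le {u : ℕ → ℝ} {C : ℝ}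
    (hu : ∀ k, |u k| ≤ C) :
    Summable (fun k => (1 / 2 : ℝ) ^ (k + 1) * u k ^ 2) ∧
      √(∑' k, (1 / 2 : ℝ) ^ (k + 1) * u k ^ 2) ≤ C := by
  have hgeom : HasSum (fun k : ℕ => (1 / 2 : ℝ) ^ (k + 1) * C ^ 2) (C ^ 2) := by
    have h : HasSum (fun k : ℕ => 1 / 2 * (1 / 2 : ℝ) ^ k * C ^ 2) (1 / 2 * 2 * C ^ 2) :=
      (hasSum_geometric_two.mul_left _).mul_right _
    simpa only [← pow_succ', one_div_mul_cancel (two_ne_zero (α := ℝ)), one_mul] using h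
  have hle (k : ℕ) : (1 / 2 : ℝ) ^ (k + 1) * u k ^ 2 ≤ (1 / 2 : ℝ) ^ (k + 1) * C ^ 2 :=
    mul_le_mul_of_nonneg_left (sq_le_sq' (neg_le_of_abs_le (hu k)) (le_of_abs_le (hu k)))
      (by positivity)
  have hsum : Summable fun k => (1 / 2 : ℝ) ^ (k + 1) * u k ^ 2 :=
    hgeom.summable.of_nonneg_of_le (fun k => by positivity) hle
  refine ⟨hsum, ?_⟩
  rw [Real.sqrt_le_left ((abs_nonneg _).trans (hu 0)), ← hgeom.tsum_eq]
  exact hsum.tsum_le_tsum hle hgeom.summable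

end WeightedSum

section Truncation

variable {α : Type*} [LinearOrder α] {φ : α → ℝ}

theorem eVariationOn_le_ofReal_of_monotoneOn {s : Set α} {m M : ℝ}
    (hφ : MonotoneOn φ s) (h : MapsTo φ s (Icc m M)) :
    eVariationOn φ s ≤ ENNReal.ofReal (M - m) := by
  rw [eVariationOn.eq_biSup_inter_Icc]
  refine iSup₂_le fun p hp => ?_
  rw [hφ.eVariationOn_eq hp.1 hp.2.1]
  exact ENNReal.ofReal_le_ofReal (sub_le_sub (h hp.2.1).2 (h hp.1).1)

theorem eVariationOn_le_ofReal_of_antitoneOn {s : Set α} {m M : ℝ}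
    (hφ : AntitoneOn φ s) (h : MapsTo φ s (Icc m M)) :
    eVariationOn φ s ≤ ENNReal.ofReal (M - m) :=
  (eVariationOn.comp_le_of_antitoneOn (φ ∘ OrderDual.ofDual) (s := OrderDual.ofDual ⁻¹' s)
    OrderDual.toDual (fun _ _ _ _ => id) fun _ => id).trans
    (eVariationOn_le_ofReal_of_monotoneOn hφ.dual_left h)

theorem eVariationOn_indicator_Icc_le {p q : α} (hpq : p ≤ q)
    (hφ : MonotoneOn φ (Icc p q)) (hp : 0 ≤ φ p) :
    eVariationOn ((Icc p q).indicator φ) univ ≤ ENNReal.ofReal (2 * φ q) := by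
  have hq : 0 ≤ φ q := hp.trans (hφ (left_mem_Icc.2 hpq) (right_mem_Icc.2 hpq) hpq)
  have hmem (s : Set α) : MapsTo ((Icc p q).indicator φ) s (Icc 0 (φ q)) := fun t _ => by
    rw [indicator_apply]
    split_ifs with ht
    · exact ⟨hp.trans (hφ (left_mem_Icc.2 hpq) ht ht.1), hφ ht (right_mem_Icc.2 hpq) ht.2⟩
    · exact ⟨le_rfl, hq⟩
  have hmono : MonotoneOn ((Icc p q).indicator φ) (Iic q) := fun s (hs : s ≤ q) t ht hst => by
    by_cases hs' : p ≤ s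
    · rw [indicator_of_mem (mem_Icc.2 ⟨hs', hs⟩), indicator_of_mem (mem_Icc.2 ⟨hs'.trans hst, ht⟩)]
      exact hφ ⟨hs', hs⟩ ⟨hs'.trans hst, ht⟩ hst
    · rw [indicator_of_notMem fun h => hs' h.1]
      exact (hmem univ (mem_univ t)).1
  have hanti : AntitoneOn ((Icc p q).indicator φ) (Ici q) := fun s hs t ht hst => by
    rcases (mem_Ici.1 ht).eq_or_lt with rfl | hqt
    · rw [le_antisymm hst hs]
    · rw [indicator_of_notMem fun h => h.2.not_gt hqt]
      exact (hmem univ (mem_univ s)).1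
  calc eVariationOn ((Icc p q).indicator φ) univ
      = eVariationOn ((Icc p q).indicator φ) (Iic q)
          + eVariationOn ((Icc p q).indicator φ) (Ici q) := by
        rw [← Iic_union_Ici (a := q), eVariationOn.union _ isGreatest_Iic isLeast_Ici]
    _ ≤ ENNReal.ofReal (φ q - 0) + ENNReal.ofReal (φ q - 0) :=
        add_le_add (eVariationOn_le_ofReal_of_monotoneOn hmono (hmem _))
          (eVariationOn_le_ofReal_of_antitoneOn hanti (hmem _))
    _ = ENNReal.ofReal (2 * φ q) := by
        rw [← ENNReal.ofReal_add (by simpa) (by simpa), sub_zero, two_mul]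

theorem xiK_eq_indicator (x : ℕ → ℝ) (b : ℕ ≃ ℕ × ℕ) (k : ℕ) :
    xiK x b k = (Icc (x (b k).2 - π / (2 * (3 * 2 ^ (b k).1)))
      (x (b k).2 + π / (2 * (3 * 2 ^ (b k).1)))).indicator
      fun t => exp (t - x (b k).2) * 3 ^ (-(π + |x (b k).2|)) := by
  have hradius : π / (2 * (3 * 2 ^ (b k).1)) ≤ π / 2 ^ ((b k).1 + 1 + 1) := by
    gcongr
    rw [pow_succ, pow_succ]
    linarith [pow_pos (two_pos (α := ℝ)) (b k).1]
  ext t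
  by_cases ht : |t - x (b k).2| ≤ π / (2 * (3 * 2 ^ (b k).1))
  · rw [indicator_of_mem (mem_Icc_iff_abs_le.1 (abs_sub_comm t _ ▸ ht)), xiK, if_pos ht, xi1,
      if_pos (ht.trans hradius)]
  · rw [indicator_of_notMem fun h => ht (abs_sub_comm t _ ▸ mem_Icc_iff_abs_le.2 h), xiK,
      if_neg ht]

theorem iSup_eVariationOn_xiK_lt_top (x : ℕ → ℝ) (b : ℕ ≃ ℕ × ℕ) :
    ⨆ k, eVariationOn (xiK x b k) univ < ⊤ := by
  refine (iSup_le fun k => ?_).trans_lt (ENNReal.ofReal_lt_top (r := 2 * exp π))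
  set c := x (b k).2
  set r := π / (2 * (3 * 2 ^ (b k).1))
  have hr : 0 ≤ r := by positivity
  have hrπ : r ≤ π :=
    div_le_self pi_pos.le (by linarith [one_le_pow₀ one_le_two (M₀ := ℝ) (n := (b k).1)])
  have hweight : (3 : ℝ) ^ (-(π + |c|)) ≤ 1 :=
    rpow_le_one_of_one_le_of_nonpos (by norm_num) (neg_nonpos.2 (by positivity))
  have hmono : Monotone fun t => exp (t - c) * (3 : ℝ) ^ (-(π + |c|)) := fun s t hst => by
    beta_reduce; gcongr
  rw [xiK_eq_indicator]
  refine (eVariationOn_indicator_Icc_le (by linarith) (hmono.monotoneOn _)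
    (by positivity)).trans ?_
  gcongr
  rw [add_sub_cancel_left]
  exact (mul_le_of_le_one_right (exp_pos _).le hweight).trans (exp_le_exp.2 hrπ)

end Truncation

section Alexiewicz

theorem abs_le_sSup_of_isHKPrimitive {f F : ℝ → ℝ} {Ival : ℝ → ℝ → ℝ}
    (hInt : ∀ a c : ℝ, ∀ h : a < c, HKHasIntegral f a c h (Ival a c))
    (hAlex : BddAbove {r : ℝ | ∃ (a c : ℝ) (_ : a < c), r = |Ival a c|})
    (hF : IsHKPrimitive f F) (u v : ℝ) :
    |F v - F u| ≤ sSup {r : ℝ | ∃ (a c : ℝ) (_ : a < c), r = |Ival a c|} := by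
  have hle {a c : ℝ} (h : a < c) :
      |F c - F a| ≤ sSup {r : ℝ | ∃ (a c : ℝ) (_ : a < c), r = |Ival a c|} :=
    (hF a c h).unique (hInt a c h) ▸ le_csSup hAlex ⟨a, c, h, rfl⟩
  rcases lt_trichotomy u v with h | rfl | h
  · exact hle h
  · rw [sub_self, abs_zero]
    exact (abs_nonneg _).trans (hle zero_lt_one)
  · exact abs_sub_comm (F v) _ ▸ hle h

theorem HK_subset_SD2_general (ξ : ℕ → ℝ → ℝ) (hξ : ⨆ k, eVariationOn (ξ k) univ < ⊤)
    (f : ℝ → ℝ) (Ival : ℝ → ℝ → ℝ)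
    (hInt : ∀ a c : ℝ, ∀ h : a < c, HKHasIntegral f a c h (Ival a c))
    (hAlex : BddAbove {r : ℝ | ∃ (a c : ℝ) (_ : a < c), r = |Ival a c|}) :
    ∃ Fv : ℕ → ℝ,
      (∀ (k : ℕ) (a c : ℝ) (h : a < c), Function.support (ξ k) ⊆ Icc a c →
        HKHasIntegral (fun t => ξ k t * f t) a c h (Fv k)) ∧
      Summable (fun k : ℕ => (1 / 2 : ℝ) ^ (k + 1) * Fv k ^ 2) ∧
      √(∑' k : ℕ, (1 / 2 : ℝ) ^ (k + 1) * Fv k ^ 2) ≤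
        (⨆ k, eVariationOn (ξ k) univ).toReal *
          sSup {r : ℝ | ∃ (a c : ℝ) (_ : a < c), r = |Ival a c|} := by
  obtain ⟨F, hF0, hF⟩ := exists_isHKPrimitive hInt 0
  have hFA (t : ℝ) : |F t| ≤ sSup {r : ℝ | ∃ (a c : ℝ) (_ : a < c), r = |Ival a c|} := by
    simpa only [hF0, sub_zero] using abs_le_sSup_of_isHKPrimitive hInt hAlex hF 0 t
  have hle (k : ℕ) : eVariationOn (ξ k) univ ≤ ⨆ k, eVariationOn (ξ k) univ :=
    le_iSup (fun k => eVariationOn (ξ k) univ) k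
  have hbv (k : ℕ) : BoundedVariationOn (ξ k) univ := ((hle k).trans_lt hξ).ne
  refine ⟨fun k => -∫ᵛ s, F s ∂•(hbv k).vectorMeasure,
    fun k a c h hsupp => hF.hasIntegral_mul_of_support_subset (hbv k) h hsupp,
    summable_geometric_two_mul_sq_and_sqrt_tsum_le fun k => ?_⟩
  rw [abs_neg]
  exact (abs_integral_vectorMeasure_le (hbv k) hFA).trans <|
    mul_le_mul_of_nonneg_right (ENNReal.toReal_mono hξ.ne (hle k)) ((abs_nonneg _).trans (hFA 0))

end Alexiewicz

/-- Lemma 17 (one-dimensional case): Henstock–Kurzweil integrable functions lie in `SD²`.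
Each `ξ_k` has bounded total variation with `V = sup_k V(ξ_k) < ∞`; if `f : ℝ → ℝ` is
HK-integrable on every compact interval (with integrals `Ival a b`) and has finite
Alexiewicz norm `‖f‖_A = sup_{a ≤ b} |(HK)∫_a^b f|`, then each HK integral
`F_k(f) = (HK)∫ ξ_k·f` exists and `‖f‖_{SD²} = (Σ_k 2^(−k)|F_k(f)|²)^{1/2} ≤ V·‖f‖_A < ∞`. -/
theorem HK_subset_SD2 (x : ℕ → ℝ) (hx : IsRationalEnum1 x) (b : ℕ ≃ ℕ × ℕ)
    (f : ℝ → ℝ) (Ival : ℝ → ℝ → ℝ)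
    (hInt : ∀ a c : ℝ, ∀ h : a < c, HKHasIntegral f a c h (Ival a c))
    (hAlex : BddAbove {r : ℝ | ∃ (a c : ℝ) (_ : a < c), r = |Ival a c|}) :
    (∀ k : ℕ, eVariationOn (xiK x b k) Set.univ < ⊤) ∧
    (⨆ k : ℕ, eVariationOn (xiK x b k) Set.univ) < ⊤ ∧
    ∃ Fv : ℕ → ℝ,
      (∀ (k : ℕ) (a c : ℝ) (h : a < c), Function.support (xiK x b k) ⊆ Set.Icc a c →
        HKHasIntegral (fun t => xiK x b k t * f t) a c h (Fv k)) ∧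
      Summable (fun k : ℕ => (1 / 2 : ℝ) ^ (k + 1) * Fv k ^ 2) ∧
      Real.sqrt (∑' k : ℕ, (1 / 2 : ℝ) ^ (k + 1) * Fv k ^ 2) ≤
        (⨆ k : ℕ, eVariationOn (xiK x b k) Set.univ).toReal *
          sSup {r : ℝ | ∃ (a c : ℝ) (_ : a < c), r = |Ival a c|} := by
  have hV := iSup_eVariationOn_xiK_lt_top x b
  exact ⟨fun k => (le_iSup (fun k => eVariationOn (xiK x b k) univ) k).trans_lt hV, hV,
    HK_subset_SD2_general (xiK x b) hV f Ival hInt hAlex⟩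

end
end
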